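/- Let N ≥ 3, 2* = 2N/(N−2), q ∈ (1, 2*−1), β > 0, and let a, b satisfy (a₁), (b₁), (a₂); fix Ω'_Γ as above, let δ₀ ∈ (0,1) and ν₀ > 0 be constants for which the inequality δ₀ ∫_{ℝ^N} K(|∇u|² + (λ a + b) u²) dx ≤ ∫_{ℝ^N} K(|∇u|² + (λ a + b) u²) dx − ν₀ ∫_{ℝ^N} K u² dx holds for all λ ≥ 1 and all admissible u, and define f, F, g, G accordingly. Then for every λ ≥ 1 and every continuously differentiable u : ℝ^N → ℝ for which ‖u‖²_{K,λ} := ∫_{ℝ^N} K(|∇u|² + (λ a + b)u²) dx, ∫_{ℝ^N} K G(x,u) dx and ∫_{ℝ^N} K g(x,u) u dx are finite, one has δ₀ (1/2 − 1/(q+1)) ‖u‖²_{K,λ} ≤ Φ_λ(u) − (1/(q+1)) ⟨Φ'_λ(u), u⟩. -/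

import Mathlib

open MeasureTheory Real Filter Topology RealInnerProductSpace

noncomputable section

abbrev En (N : ℕ) := EuclideanSpace ℝ (Fin N)

/-- The weight `K(x) = exp(|x|²/4)`. -/
def Kw {N : ℕ} (x : En N) : ℝ := Real.exp (‖x‖ ^ 2 / 4)

/-- The Laplacian `Δu(x) = ∑ᵢ ∂²u/∂xᵢ²(x)`. -/
def lap {N : ℕ} (u : En N → ℝ) (x : En N) : ℝ :=
  ∑ i : Fin N, fderiv ℝ (fun y => fderiv ℝ u y (EuclideanSpace.single i (1:ℝ))) x
    (EuclideanSpace.single i (1:ℝ))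

/-- The critical Sobolev exponent `2* = 2N/(N−2)`. -/
def twoStar (N : ℕ) : ℝ := 2 * N / ((N : ℝ) - 2)

/-- `h(t) = βt^q + t^{p−1}` for `t ≥ 0`, `h(t) = 0` for `t ≤ 0` (with `p = 2*`). -/
def hfun (q p β : ℝ) (t : ℝ) : ℝ := if t ≤ 0 then 0 else β * t ^ q + t ^ (p - 1)

/-- The truncation `f` of `h`: `f = h` on `[0,ρ]`, `f(t) = ν₀t` for `t ≥ ρ`, `f = 0` on `(-∞,0]`. -/
def ffun (q p β ν₀ ρ : ℝ) (t : ℝ) : ℝ :=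
  if t ≤ 0 then 0 else if t ≤ ρ then β * t ^ q + t ^ (p - 1) else ν₀ * t

/-- `H(t) = ∫₀^t h`. -/
def Hfun (q p β : ℝ) (t : ℝ) : ℝ := ∫ τ in (0:ℝ)..t, hfun q p β τ

/-- `F(t) = ∫₀^t f`. -/
def Ffun (q p β ν₀ ρ : ℝ) (t : ℝ) : ℝ := ∫ τ in (0:ℝ)..t, ffun q p β ν₀ ρ τ

-- `g(x,t) = h(t)` for `x ∈ Ω'_Γ`, `g(x,t) = f(t)` otherwise.
open Classical in
def gfun {N : ℕ} (q p β ν₀ ρ : ℝ) (Ω' : Set (En N)) (x : En N) (t : ℝ) : ℝ :=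
  if x ∈ Ω' then hfun q p β t else ffun q p β ν₀ ρ t

-- `G(x,t) = H(t)` for `x ∈ Ω'_Γ`, `G(x,t) = F(t)` otherwise.
open Classical in
def Gfun {N : ℕ} (q p β ν₀ ρ : ℝ) (Ω' : Set (En N)) (x : En N) (t : ℝ) : ℝ :=
  if x ∈ Ω' then Hfun q p β t else Ffun q p β ν₀ ρ t

/-- The squared norm `‖u‖²_{K,λ} = ∫ K(|∇u|² + (λa+b)u²)`. -/
def nrmSq {N : ℕ} (lam : ℝ) (a b : En N → ℝ) (u : En N → ℝ) : ℝ :=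
  ∫ x, Kw x * (‖gradient u x‖ ^ 2 + (lam * a x + b x) * u x ^ 2)

/-- The modified functional
`Φ_λ(u) = (1/2)∫ K(|∇u|² + (λa+b)u²) − ∫ K G(x,u)`. -/
def Phi {N : ℕ} (q p β ν₀ ρ lam : ℝ) (a b : En N → ℝ) (Ω' : Set (En N)) (u : En N → ℝ) : ℝ :=
  (1/2) * nrmSq lam a b u - ∫ x, Kw x * Gfun q p β ν₀ ρ Ω' x (u x)

/-- The pairing `⟨Φ'_λ(u), φ⟩ = ∫ K(∇u·∇φ + (λa+b)uφ) − ∫ K g(x,u)φ`. -/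
def PhiD {N : ℕ} (q p β ν₀ ρ lam : ℝ) (a b : En N → ℝ) (Ω' : Set (En N)) (u φ : En N → ℝ) : ℝ :=
  (∫ x, Kw x * (⟪gradient u x, gradient φ x⟫ + (lam * a x + b x) * u x * φ x))
    - ∫ x, Kw x * gfun q p β ν₀ ρ Ω' x (u x) * φ x

/-!
The nonlinearity `h` satisfies the Ambrosetti–Rabinowitz inequality `(q + 1) H(t) ≤ h(t) t`. Its
truncation `f` is linear beyond the point `ρ` where `h` meets the line `t ↦ ν₀ t`, so there it
satisfies the inequality only up to the quadratic error `(1/2 - 1/(q+1)) ν₀ t²`. In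
`Φ(u) - (1/(q+1)) ⟨Φ'(u), u⟩` the quadratic parts leave `(1/2 - 1/(q+1)) ‖u‖²`, and the integrated
error, `(1/2 - 1/(q+1)) ν₀ ∫ K u²`, is exactly what the hypothesis
`δ₀ ‖u‖² ≤ ‖u‖² - ν₀ ∫ K u²` absorbs. The last integral is finite because `λ a + b` is bounded
below by a positive constant.
-/

section Nonlinearity

variable {q p β ν₀ ρ t : ℝ}

theorem hfun_of_nonpos (ht : t ≤ 0) : hfun q p β t = 0 :=
  if_pos ht

theorem hfun_of_pos (ht : 0 < t) : hfun q p β t = β * t ^ q + t ^ (p - 1) :=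
  if_neg ht.not_ge

theorem hfun_eq_mul_self (ht : 0 < t) :
    hfun q p β t = (β * t ^ (q - 1) + t ^ (p - 2)) * t := by
  rw [hfun_of_pos ht, add_mul, mul_assoc, ← rpow_add_one ht.ne', ← rpow_add_one ht.ne']
  ring_nf

theorem ffun_of_le (ht : t ≤ ρ) : ffun q p β ν₀ ρ t = hfun q p β t := by
  simp only [ffun, hfun, if_pos ht]

theorem ffun_of_lt (hρ : 0 ≤ ρ) (ht : ρ < t) : ffun q p β ν₀ ρ t = ν₀ * t := by
  simp only [ffun, if_neg (hρ.trans_lt ht).not_ge, if_neg ht.not_ge]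

theorem intervalIntegrable_hfun (hq : -1 < q) (hp : 0 < p) (ht : 0 ≤ t) :
    IntervalIntegrable (hfun q p β) volume 0 t := by
  have hpowers : IntervalIntegrable (fun τ ↦ β * τ ^ q + τ ^ (p - 1)) volume 0 t :=
    ((intervalIntegral.intervalIntegrable_rpow' hq).const_mul β).add
      (intervalIntegral.intervalIntegrable_rpow' (by linarith))
  refine hpowers.congr fun τ hτ ↦ (hfun_of_pos ?_).symm
  exact (Set.uIoc_of_le ht ▸ hτ).1

theorem Hfun_of_nonpos (ht : t ≤ 0) : Hfun q p β t = 0 := by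
  have hzero : Set.EqOn (hfun q p β) (fun _ ↦ 0) (Set.uIcc 0 t) := fun τ hτ ↦
    hfun_of_nonpos (Set.uIcc_of_ge ht ▸ hτ).2
  rw [Hfun, intervalIntegral.integral_congr hzero, intervalIntegral.integral_zero]

theorem Hfun_of_nonneg (hq : -1 < q) (hp : 0 < p) (ht : 0 ≤ t) :
    Hfun q p β t = β * (t ^ (q + 1) / (q + 1)) + t ^ p / p := by
  have hpowers : Set.EqOn (hfun q p β) (fun τ ↦ β * τ ^ q + τ ^ (p - 1)) (Set.Ioo 0 t) :=
    fun τ hτ ↦ hfun_of_pos hτ.1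
  rw [Hfun, intervalIntegral.integral_congr_Ioo_of_le ht hpowers, intervalIntegral.integral_add
      ((intervalIntegral.intervalIntegrable_rpow' hq).const_mul β)
      (intervalIntegral.intervalIntegrable_rpow' (by linarith)),
    intervalIntegral.integral_const_mul, integral_rpow (.inl hq),
    integral_rpow (.inl (by linarith)), sub_add_cancel, zero_rpow (by linarith),
    zero_rpow hp.ne', sub_zero, sub_zero]

theorem Hfun_le_hfun_mul_self (hq : -1 < q) (hqp : q + 1 ≤ p) :
    Hfun q p β t ≤ 1 / (q + 1) * (hfun q p β t * t) := by
  rcases le_or_gt t 0 with ht | ht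
  · simp only [Hfun_of_nonpos ht, hfun_of_nonpos ht, zero_mul, mul_zero, le_refl]
  have hq' : 0 < q + 1 := by linarith
  calc Hfun q p β t = β * (t ^ (q + 1) / (q + 1)) + t ^ p / p :=
        Hfun_of_nonneg hq (hq'.trans_le hqp) ht.le
    _ ≤ β * (t ^ (q + 1) / (q + 1)) + t ^ p / (q + 1) := by gcongr
    _ = 1 / (q + 1) * (β * t ^ (q + 1) + t ^ (p - 1 + 1)) := by rw [sub_add_cancel]; ring
    _ = 1 / (q + 1) * (hfun q p β t * t) := by
        rw [hfun_of_pos ht, rpow_add_one ht.ne', rpow_add_one ht.ne']; ring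

theorem Ffun_of_le (hρ : 0 ≤ ρ) (ht : t ≤ ρ) : Ffun q p β ν₀ ρ t = Hfun q p β t :=
  intervalIntegral.integral_congr fun _ hτ ↦ ffun_of_le (hτ.2.trans (max_le hρ ht))

theorem Ffun_of_ge (hq : -1 < q) (hp : 0 < p) (hρ : 0 ≤ ρ) (ht : ρ ≤ t) :
    Ffun q p β ν₀ ρ t = Hfun q p β ρ + ν₀ * ((t ^ 2 - ρ ^ 2) / 2) := by
  have hlow : Set.EqOn (hfun q p β) (ffun q p β ν₀ ρ) (Set.uIoc 0 ρ) := fun τ hτ ↦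
    (ffun_of_le (Set.uIoc_of_le hρ ▸ hτ).2).symm
  have hhigh : Set.EqOn (fun τ ↦ ν₀ * τ) (ffun q p β ν₀ ρ) (Set.uIoc ρ t) := fun τ hτ ↦
    (ffun_of_lt hρ (Set.uIoc_of_le ht ▸ hτ).1).symm
  have hlinear : IntervalIntegrable (fun τ ↦ ν₀ * τ) volume ρ t :=
    (continuous_const_mul ν₀).intervalIntegrable ρ t
  calc Ffun q p β ν₀ ρ t
      = Ffun q p β ν₀ ρ ρ + ∫ τ in ρ..t, ffun q p β ν₀ ρ τ :=
        (intervalIntegral.integral_add_adjacent_intervals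
          ((intervalIntegrable_hfun hq hp hρ).congr hlow) (hlinear.congr hhigh)).symm
    _ = Hfun q p β ρ + ∫ τ in ρ..t, ν₀ * τ := by
        rw [Ffun_of_le hρ le_rfl, intervalIntegral.integral_congr_Ioo_of_le ht
          fun τ hτ ↦ ffun_of_lt hρ hτ.1]
    _ = Hfun q p β ρ + ν₀ * ((t ^ 2 - ρ ^ 2) / 2) := by
        rw [intervalIntegral.integral_const_mul, integral_id]

theorem half_sub_one_div_add_one_nonneg (hq : 1 ≤ q) : 0 ≤ 1 / 2 - 1 / (q + 1) :=
  sub_nonneg.2 (one_div_le_one_div_of_le two_pos (by linarith))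

theorem Ffun_le_ffun_mul_self_add (hq : 1 ≤ q) (hqp : q + 1 ≤ p) (hν₀ : 0 ≤ ν₀) (hρ : 0 ≤ ρ)
    (hρν : hfun q p β ρ = ν₀ * ρ) :
    Ffun q p β ν₀ ρ t ≤
      1 / (q + 1) * (ffun q p β ν₀ ρ t * t) + (1 / 2 - 1 / (q + 1)) * (ν₀ * t ^ 2) := by
  have hθ := half_sub_one_div_add_one_nonneg hq
  have hq' : -1 < q := by linarith
  rcases le_or_gt t ρ with ht | ht
  · rw [Ffun_of_le hρ ht, ffun_of_le ht]
    exact (Hfun_le_hfun_mul_self hq' hqp).trans (le_add_of_nonneg_right (by positivity))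
  · have hHρ : Hfun q p β ρ ≤ 1 / (q + 1) * (ν₀ * ρ * ρ) :=
      hρν ▸ Hfun_le_hfun_mul_self hq' hqp
    calc Ffun q p β ν₀ ρ t
        = Hfun q p β ρ + ν₀ * ((t ^ 2 - ρ ^ 2) / 2) :=
          Ffun_of_ge hq' (by linarith) hρ ht.le
      _ ≤ 1 / (q + 1) * (ν₀ * ρ * ρ) + ν₀ * ((t ^ 2 - ρ ^ 2) / 2)
            + (1 / 2 - 1 / (q + 1)) * (ν₀ * ρ ^ 2) :=
          le_add_of_le_of_nonneg (by gcongr) (by positivity)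
      _ = 1 / (q + 1) * (ν₀ * t * t) + (1 / 2 - 1 / (q + 1)) * (ν₀ * t ^ 2) := by ring
      _ = _ := by rw [ffun_of_lt hρ ht]

theorem Gfun_le_gfun_mul_self_add {N : ℕ} (hq : 1 ≤ q) (hqp : q + 1 ≤ p) (hν₀ : 0 ≤ ν₀)
    (hρ : 0 ≤ ρ) (hρν : hfun q p β ρ = ν₀ * ρ) (Ω' : Set (En N)) (x : En N) :
    Gfun q p β ν₀ ρ Ω' x t ≤
      1 / (q + 1) * (gfun q p β ν₀ ρ Ω' x t * t) + (1 / 2 - 1 / (q + 1)) * (ν₀ * t ^ 2) := by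
  have hθ := half_sub_one_div_add_one_nonneg hq
  by_cases hx : x ∈ Ω'
  · simp only [Gfun, gfun, if_pos hx]
    exact (Hfun_le_hfun_mul_self (by linarith) hqp).trans
      (le_add_of_nonneg_right (by positivity))
  · simp only [Gfun, gfun, if_neg hx]
    exact Ffun_le_ffun_mul_self_add hq hqp hν₀ hρ hρν

end Nonlinearity

theorem integrable_mul_sq_of_integrable_energy {α : Type*} [MeasurableSpace α] {μ : Measure α}
    {w D V u : α → ℝ} {m : ℝ} (hm : 0 < m) (hw : ∀ x, 0 ≤ w x) (hD : ∀ x, 0 ≤ D x)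
    (hV : ∀ x, m ≤ V x) (hwm : AEStronglyMeasurable w μ) (hum : AEStronglyMeasurable u μ)
    (hI : Integrable (fun x ↦ w x * (D x + V x * u x ^ 2)) μ) :
    Integrable (fun x ↦ w x * u x ^ 2) μ := by
  refine (hI.const_mul m⁻¹).mono' (hwm.mul (hum.pow 2)) (.of_forall fun x ↦ ?_)
  have hwx := hw x
  rw [norm_of_nonneg (by positivity), le_inv_mul_iff₀ hm]
  calc m * (w x * u x ^ 2) = w x * (0 + m * u x ^ 2) := by ring
    _ ≤ w x * (D x + V x * u x ^ 2) := by gcongr <;> [exact hD x; exact hV x]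

section Functional

variable {N : ℕ} {q p β ν₀ ρ lam : ℝ} {a b u : En N → ℝ} {Ω' : Set (En N)}

theorem Kw_nonneg (x : En N) : 0 ≤ Kw x :=
  (exp_pos _).le

theorem continuous_Kw : Continuous (Kw : En N → ℝ) := by
  unfold Kw
  fun_prop

theorem PhiD_self :
    PhiD q p β ν₀ ρ lam a b Ω' u u =
      nrmSq lam a b u - ∫ x, Kw x * gfun q p β ν₀ ρ Ω' x (u x) * u x := by
  simp only [PhiD, nrmSq, real_inner_self_eq_norm_sq, mul_assoc, pow_two (u _)]

theorem integral_Kw_mul_Gfun_le (hq : 1 ≤ q) (hqp : q + 1 ≤ p) (hν₀ : 0 ≤ ν₀) (hρ : 0 ≤ ρ)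
    (hρν : hfun q p β ρ = ν₀ * ρ) (hu : Integrable fun x ↦ Kw x * u x ^ 2)
    (hG : Integrable fun x ↦ Kw x * Gfun q p β ν₀ ρ Ω' x (u x))
    (hg : Integrable fun x ↦ Kw x * gfun q p β ν₀ ρ Ω' x (u x) * u x) :
    ∫ x, Kw x * Gfun q p β ν₀ ρ Ω' x (u x) ≤
      1 / (q + 1) * (∫ x, Kw x * gfun q p β ν₀ ρ Ω' x (u x) * u x)
        + (1 / 2 - 1 / (q + 1)) * ν₀ * ∫ x, Kw x * u x ^ 2 := by
  rw [← integral_const_mul, ← integral_const_mul,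
    ← integral_add (hg.const_mul _) (hu.const_mul _)]
  refine integral_mono hG ((hg.const_mul _).add (hu.const_mul _)) fun x ↦ ?_
  calc Kw x * Gfun q p β ν₀ ρ Ω' x (u x)
      ≤ Kw x * (1 / (q + 1) * (gfun q p β ν₀ ρ Ω' x (u x) * u x)
          + (1 / 2 - 1 / (q + 1)) * (ν₀ * u x ^ 2)) :=
        mul_le_mul_of_nonneg_left (Gfun_le_gfun_mul_self_add hq hqp hν₀ hρ hρν Ω' x) (Kw_nonneg x)
    _ = 1 / (q + 1) * (Kw x * gfun q p β ν₀ ρ Ω' x (u x) * u x)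
          + (1 / 2 - 1 / (q + 1)) * ν₀ * (Kw x * u x ^ 2) := by ring

theorem PS_lower_estimate_general {M₀ δ₀ : ℝ} (hq : 1 ≤ q) (hqp : q + 1 ≤ p) (hν₀ : 0 ≤ ν₀)
    (hρ : 0 < ρ) (hρeq : β * ρ ^ (q - 1) + ρ ^ (p - 2) = ν₀)
    (hM₀ : 0 < M₀) (hab : ∀ x, M₀ ≤ lam * a x + b x) (hu : Differentiable ℝ u)
    (hI : Integrable fun x ↦ Kw x * (‖gradient u x‖ ^ 2 + (lam * a x + b x) * u x ^ 2))
    (hG : Integrable fun x ↦ Kw x * Gfun q p β ν₀ ρ Ω' x (u x))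
    (hg : Integrable fun x ↦ Kw x * gfun q p β ν₀ ρ Ω' x (u x) * u x)
    (hδ : δ₀ * nrmSq lam a b u ≤ nrmSq lam a b u - ν₀ * ∫ x, Kw x * u x ^ 2) :
    δ₀ * (1 / 2 - 1 / (q + 1)) * nrmSq lam a b u ≤
      Phi q p β ν₀ ρ lam a b Ω' u - 1 / (q + 1) * PhiD q p β ν₀ ρ lam a b Ω' u u := by
  have hKu : Integrable fun x ↦ Kw x * u x ^ 2 :=
    integrable_mul_sq_of_integrable_energy hM₀ Kw_nonneg (fun x ↦ sq_nonneg ‖gradient u x‖) hab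
      continuous_Kw.aestronglyMeasurable hu.continuous.aestronglyMeasurable hI
  have hGg := integral_Kw_mul_Gfun_le hq hqp hν₀ hρ.le
    (by rw [hfun_eq_mul_self hρ, hρeq]) hKu hG hg
  have hδθ := mul_le_mul_of_nonneg_left hδ (half_sub_one_div_add_one_nonneg hq)
  rw [Phi, PhiD_self]
  linarith

end Functional

/-- under (a₁), (b₁), (a₂), for the truncated functional `Φ_λ`, if
`δ₀ ∈ (0,1)` and `ν₀ > 0` are constants for which
`δ₀‖u‖²_{K,λ} ≤ ‖u‖²_{K,λ} − ν₀∫Ku²` holds for all `λ ≥ 1` and admissible `u`, then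
`δ₀(1/2 − 1/(q+1))‖u‖²_{K,λ} ≤ Φ_λ(u) − (1/(q+1))⟨Φ'_λ(u), u⟩`
for every `λ ≥ 1` and every admissible `u`. -/
theorem PS_lower_estimate {N k : ℕ} (hN : 3 ≤ N) (hk : 0 < k)
    (q : ℝ) (hq1 : 1 < q) (hq2 : q < twoStar N - 1)
    (a b : En N → ℝ)
    (ha_cont : Continuous a) (ha_nonneg : ∀ x, 0 ≤ a x)
    (Ωs : Fin k → Set (En N))
    (hΩ_open : ∀ j, IsOpen (Ωs j))
    (hΩ_ne : ∀ j, (Ωs j).Nonempty)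
    (hΩ_conn : ∀ j, IsConnected (Ωs j))
    (hΩ_sep : ∀ i j, i ≠ j → ∃ d > (0:ℝ), ∀ x ∈ Ωs i, ∀ y ∈ Ωs j, d ≤ dist x y)
    (hΩ_int : interior (a ⁻¹' {0}) = ⋃ j, Ωs j)
    (hΩ_bdd : Bornology.IsBounded (⋃ j, Ωs j))
    (hΩ_cl : a ⁻¹' {0} = closure (⋃ j, Ωs j))
    (hb_cont : Continuous b) (M₁ : ℝ) (hM₁ : 0 < M₁) (hb_bdd : ∀ x, |b x| ≤ M₁)
    (M₀ : ℝ) (hM₀ : 0 < M₀) (hab : ∀ x, M₀ ≤ a x + b x)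
    (Ωs' : Fin k → Set (En N))
    (hΩ'_open : ∀ j, IsOpen (Ωs' j))
    (hΩ'_bdd : ∀ j, Bornology.IsBounded (Ωs' j))
    (hΩ'_sub : ∀ j, closure (Ωs j) ⊆ Ωs' j)
    (hΩ'_disj : ∀ i j, i ≠ j → closure (Ωs' i) ∩ closure (Ωs' j) = ∅)
    (Γ : Finset (Fin k)) (hΓ : Γ.Nonempty)
    (β : ℝ) (hβ : 0 < β) (ν₀ : ℝ) (hν₀ : 0 < ν₀) (ρ : ℝ) (hρ : 0 < ρ)
    (hρeq : β * ρ ^ (q - 1) + ρ ^ (twoStar N - 2) = ν₀)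
    (δ₀ : ℝ) (hδ₀ : δ₀ ∈ Set.Ioo (0:ℝ) 1)
    (hδ : ∀ lam : ℝ, 1 ≤ lam → ∀ u : En N → ℝ, ContDiff ℝ 1 u →
      Integrable (fun x => Kw x * (‖gradient u x‖ ^ 2 + (lam * a x + b x) * u x ^ 2)) →
      δ₀ * nrmSq lam a b u ≤ nrmSq lam a b u - ν₀ * ∫ x, Kw x * u x ^ 2) :
    ∀ lam : ℝ, 1 ≤ lam → ∀ u : En N → ℝ, ContDiff ℝ 1 u →
      Integrable (fun x => Kw x * (‖gradient u x‖ ^ 2 + (lam * a x + b x) * u x ^ 2)) →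
      Integrable (fun x => Kw x * Gfun q (twoStar N) β ν₀ ρ (⋃ j ∈ Γ, Ωs' j) x (u x)) →
      Integrable (fun x => Kw x * gfun q (twoStar N) β ν₀ ρ (⋃ j ∈ Γ, Ωs' j) x (u x) * u x) →
      δ₀ * (1/2 - 1/(q+1)) * nrmSq lam a b u ≤
        Phi q (twoStar N) β ν₀ ρ lam a b (⋃ j ∈ Γ, Ωs' j) u
          - (1/(q+1)) * PhiD q (twoStar N) β ν₀ ρ lam a b (⋃ j ∈ Γ, Ωs' j) u u := by
  intro lam hlam u hu hI hG hg
  exact PS_lower_estimate_general hq1.le (by linarith) hν₀.le hρ hρeq hM₀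
    (fun x ↦ (hab x).trans (by gcongr; exact le_mul_of_one_le_left (ha_nonneg x) hlam))
    (hu.differentiable one_ne_zero) hI hG hg (hδ lam hlam u hu hI)
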